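/- For every finite simple graph G it holds that tw(G) ≤ pw(G) and pw(G) ≤ (tw(G) + 1)·(log₃(2·|V(G)| + 1) + 1) − 1, where tw(G) is the tree-width and pw(G) is the path-width of G. -/

import Mathlib

open SimpleGraph

/-- `(T, X)` is a tree-decomposition of the graph `G`. -/
def IsTreeDecomp {V ι : Type} (G : SimpleGraph V) (T : SimpleGraph ι)
    (X : ι → Finset V) : Prop :=
  T.IsTree ∧
  (∀ v : V, ∃ u : ι, v ∈ X u) ∧
  (∀ v w : V, G.Adj v w → ∃ u : ι, v ∈ X u ∧ w ∈ X u) ∧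
  (∀ v : V, (T.induce {u : ι | v ∈ X u}).Connected)

/-- The tree-width of `G`: the minimum over all tree-decompositions of
(maximum bag size − 1). -/
noncomputable def treewidth {V : Type} (G : SimpleGraph V) : ℕ :=
  sInf { k | ∃ (ι : Type) (T : SimpleGraph ι) (X : ι → Finset V),
    IsTreeDecomp G T X ∧ sSup (Set.range fun u => (X u).card) - 1 = k }

/-- `X` is a path-decomposition of the graph `G`. -/
def IsPathDecomp {V : Type} {r : ℕ} (G : SimpleGraph V) (X : Fin r → Finset V) : Prop :=
  (∀ v : V, ∃ i, v ∈ X i) ∧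
  (∀ v w : V, G.Adj v w → ∃ i, v ∈ X i ∧ w ∈ X i) ∧
  (∀ i j l : Fin r, i < j → j < l → ∀ x, x ∈ X i → x ∈ X l → x ∈ X j)

/-- The path-width of `G`: the minimum over all path-decompositions of
(maximum bag size − 1). -/
noncomputable def pathwidth {V : Type} (G : SimpleGraph V) : ℕ :=
  sInf { k | ∃ (r : ℕ) (X : Fin r → Finset V),
    IsPathDecomp G X ∧ sSup (Set.range fun i => (X i).card) - 1 = k }

/-!
A path-decomposition with bags `X₁, …, Xₙ` is a tree-decomposition along the path `1, …, n`, so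
tree-width is at most path-width.

Conversely, given a tree-decomposition with bags of size at most `k`, the subgraph induced by any
set of fewer than `3 ^ s` vertices has a path-decomposition with bags of size at most `s * k`, by
induction on `s`. The vertices occupy subtrees of the decomposition tree, and some path of the tree
has the property that every branch leaving it contains fewer than a third of `3 ^ s` of these
subtrees entirely. Contract the tree onto this path. The vertices that occur in the branches leaving
the path at a node `p` but not in the bag of `p` occur in the contraction at `p` only, and no edge
joins vertices from different branches; so they can be decomposed recursively, branch by branch,
while keeping the bag of `p`. The recursive decompositions are then strung together along the path.
-/

section Branch

variable {ι : Type*} {T : SimpleGraph ι} {a b p q u v x y z : ι} {s : Set ι}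

lemma exists_walk_support_subset (hs : (T.induce s).Preconnected) (ha : a ∈ s) (hb : b ∈ s) :
    ∃ w : T.Walk a b, ∀ x ∈ w.support, x ∈ s := by
  obtain ⟨w⟩ := hs ⟨a, ha⟩ ⟨b, hb⟩
  refine ⟨w.map (Embedding.induce s).toHom, fun x hx => ?_⟩
  obtain ⟨c, -, rfl⟩ := List.mem_map.1 (w.support_map _ ▸ hx)
  exact c.2

lemma support_subset_support_of_isPath (hT : T.IsAcyclic) {w : T.Walk a b} (hw : w.IsPath)
    (w' : T.Walk a b) : w.support ⊆ w'.support := by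
  classical
  have hunique := (hT.subsingleton_path a b).elim ⟨w, hw⟩ w'.toPath
  rw [show w = w'.bypass from congrArg Subtype.val hunique]
  exact w'.support_bypass_subset_support

lemma support_subset_of_preconnected_induce (hT : T.IsAcyclic) (hs : (T.induce s).Preconnected)
    {w : T.Walk a b} (hw : w.IsPath) (ha : a ∈ s) (hb : b ∈ s) : ∀ x ∈ w.support, x ∈ s := by
  obtain ⟨w', hw's⟩ := exists_walk_support_subset hs ha hb
  exact fun x hx => hw's x (support_subset_support_of_isPath hT hw w' hx)

lemma getVert_mem_of_preconnected_induce (hT : T.IsAcyclic) (hs : (T.induce s).Preconnected)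
    {w : T.Walk a b} (hw : w.IsPath) {i j l : ℕ} (hij : i ≤ j) (hjl : j ≤ l)
    (hi : w.getVert i ∈ s) (hl : w.getVert l ∈ s) : w.getVert j ∈ s := by
  have hend : (w.drop i).getVert (l - i) = w.getVert l := by
    rw [Walk.drop_getVert, Nat.add_sub_cancel' (hij.trans hjl)]
  have hmid : ((w.drop i).take (l - i)).getVert (j - i) = w.getVert j := by
    rw [Walk.take_getVert, Walk.drop_getVert, min_eq_right (Nat.sub_le_sub_right hjl i),
      Nat.add_sub_cancel' hij]
  exact hmid ▸ support_subset_of_preconnected_induce hT hs ((hw.drop i).take (l - i)) hi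
    (hend ▸ hl) _ (Walk.getVert_mem_support _ _)

/-- The branch of `T` at `x` in the direction of `y`: the nodes that can be reached from `y`
without passing through `x`. For adjacent `x` and `y` this is the component of `T - x` containing
`y`. -/
def branch (T : SimpleGraph ι) (x y : ι) : Set ι := {u | ∃ w : T.Walk y u, x ∉ w.support}

lemma left_notMem_branch : x ∉ branch T x y := fun ⟨w, hw⟩ => hw w.end_mem_support

lemma right_mem_branch (h : x ≠ y) : y ∈ branch T x y := ⟨.nil, by simpa using h⟩

lemma mem_branch_of_adj (hu : u ∈ branch T x y) (huv : T.Adj u v) (hv : v ≠ x) :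
    v ∈ branch T x y := by
  obtain ⟨w, hw⟩ := hu
  exact ⟨w.concat huv, by simpa [Walk.support_concat, hv.symm] using hw⟩

lemma exists_adj_mem_branch (hT : T.Preconnected) (h : u ≠ x) :
    ∃ y, T.Adj x y ∧ u ∈ branch T x y := by
  obtain ⟨w, hw⟩ := hT.exists_isPath x u
  cases w with
  | nil => exact (h rfl).elim
  | cons hadj w => exact ⟨_, hadj, w, ((Walk.cons_isPath_iff ..).1 hw).2⟩

lemma subset_branch_of_preconnected_induce (hs : (T.induce s).Preconnected) (hx : x ∉ s)
    (hu : u ∈ s) (huy : u ∈ branch T x y) : s ⊆ branch T x y := by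
  intro v hv
  obtain ⟨w, hw⟩ := huy
  obtain ⟨w', hw's⟩ := exists_walk_support_subset hs hu hv
  refine ⟨w.append w', fun hxw => ?_⟩
  exact ((Walk.mem_support_append_iff ..).1 hxw).elim hw fun h => hx (hw's x h)

lemma preconnected_induce_branch : (T.induce (branch T x y)).Preconnected := by
  classical
  have reachable_root {u : ι} (hu : u ∈ branch T x y) :
      ∃ hy : y ∈ branch T x y, (T.induce (branch T x y)).Reachable ⟨y, hy⟩ ⟨u, hu⟩ := by
    obtain ⟨w, hw⟩ := hu
    have hws : ∀ v ∈ w.support, v ∈ branch T x y := fun v hv =>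
      ⟨w.takeUntil v hv, fun h => hw (w.support_takeUntil_subset_support hv h)⟩
    exact ⟨hws y w.start_mem_support, ⟨w.induce _ hws⟩⟩
  rintro ⟨u, hu⟩ ⟨v, hv⟩
  obtain ⟨_, hyu⟩ := reachable_root hu
  obtain ⟨_, hyv⟩ := reachable_root hv
  exact hyu.symm.trans hyv

lemma branch_subset_branch (ha : a ∉ branch T p q) (hu : u ∈ branch T p q)
    (huz : u ∈ branch T a z) : branch T p q ⊆ branch T a z :=
  subset_branch_of_preconnected_induce preconnected_induce_branch ha hu huz

lemma mem_support_of_mem_branch (hT : T.IsAcyclic) (hay : T.Adj a y) (hu : u ∈ branch T a y)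
    (w : T.Walk a u) : y ∈ w.support := by
  classical
  obtain ⟨w', hw'⟩ := hu
  have hpath : (Walk.cons hay w'.bypass).IsPath := (Walk.cons_isPath_iff ..).2
    ⟨w'.bypass_isPath, fun h => hw' (w'.support_bypass_subset_support h)⟩
  exact support_subset_support_of_isPath hT hpath w (by simp)

lemma adj_notMem_branch (hT : T.IsAcyclic) (hay : T.Adj a y) (haz : T.Adj a z) (hyz : y ≠ z) :
    y ∉ branch T a z := fun hy => by
  have hz := mem_support_of_mem_branch hT haz hy hay.toWalk
  simp [haz.ne', hyz.symm] at hz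

lemma disjoint_branch_of_ne (hT : T.IsAcyclic) (hay : T.Adj a y) (haz : T.Adj a z) (hyz : y ≠ z) :
    Disjoint (branch T a y) (branch T a z) :=
  Set.disjoint_left.2 fun _ huy huz => adj_notMem_branch hT hay haz hyz
    (branch_subset_branch left_notMem_branch huy huz (right_mem_branch hay.ne))

lemma disjoint_branch_swap (hT : T.IsAcyclic) (hxa : T.Adj x a) :
    Disjoint (branch T a x) (branch T x a) :=
  Set.disjoint_left.2 fun _ hu ⟨w, hw⟩ => hw (mem_support_of_mem_branch hT hxa.symm hu w)

lemma branch_subset_branch_of_ne (hT : T.IsAcyclic) (hxa : T.Adj x a) (haz : T.Adj a z)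
    (hzx : z ≠ x) : branch T a z ⊆ branch T x a :=
  branch_subset_branch (adj_notMem_branch hT hxa.symm haz hzx.symm) (right_mem_branch haz.ne)
    (mem_branch_of_adj (right_mem_branch hxa.ne) haz hzx)

lemma dist_lt_dist_of_mem_branch (hT : T.IsTree) (hay : T.Adj a y) (hu : u ∈ branch T a y) :
    T.dist y u < T.dist a u := by
  classical
  obtain ⟨w, -, hw⟩ := hT.connected.exists_path_of_dist a u
  have hy := mem_support_of_mem_branch hT.isAcyclic hay hu w
  calc T.dist y u ≤ (w.dropUntil y hy).length := dist_le _
    _ < w.length := Walk.length_dropUntil_lt_length hy hay.ne'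
    _ = T.dist a u := hw

lemma disjoint_branch_or_exists_branch_subset (hT : T.IsTree) (hxa : T.Adj x a) (hpq : p ≠ q)
    (ha : a ∉ branch T p q) :
    Disjoint (branch T p q) (branch T x a) ∨
      ∃ z, T.Adj a z ∧ z ≠ x ∧ branch T p q ⊆ branch T a z := by
  have hq := right_mem_branch (T := T) hpq
  obtain ⟨z, haz, hqz⟩ := exists_adj_mem_branch hT.connected.preconnected
    (ne_of_mem_of_not_mem hq ha)
  have hsub := branch_subset_branch ha hq hqz
  obtain rfl | hzx := eq_or_ne z x
  · exact .inl ((disjoint_branch_swap hT.isAcyclic hxa).mono_left hsub)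
  · exact .inr ⟨z, haz, hzx, hsub⟩

lemma disjoint_branch_of_preconnected_induce (hT : T.IsAcyclic) (hs : (T.induce s).Preconnected)
    (hp : p ∈ s) (hq : q ∉ s) (hpq : T.Adj p q) : Disjoint s (branch T p q) := by
  refine Set.disjoint_left.2 fun u hus hu => hq ?_
  obtain ⟨w, hws⟩ := exists_walk_support_subset hs hp hus
  exact hws q (mem_support_of_mem_branch hT hpq hu w)

end Branch

section HangingAt

variable {ι : Type*} {T : SimpleGraph ι} {p p' u u' : ι} {P s : Set ι}

/-- The nodes of the tree `T` whose projection to the subtree `P` is `p`: the node `p` itself and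
the branches that leave `P` at `p`. -/
def hangingAt (T : SimpleGraph ι) (P : Set ι) (p : ι) : Set ι :=
  {u | u = p ∨ ∃ q ∉ P, T.Adj p q ∧ u ∈ branch T p q}

lemma exists_mem_hangingAt (hT : T.Connected) (hP : P.Nonempty) (u : ι) :
    ∃ p ∈ P, u ∈ hangingAt T P p := by
  obtain ⟨p, hp, hmin⟩ := WellFounded.has_min (measure fun p => T.dist p u).wf P hP
  refine ⟨p, hp, ?_⟩
  obtain ⟨w, hw, hlen⟩ := hT.exists_path_of_dist p u
  cases w with
  | nil => exact .inl rfl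
  | @cons _ q _ hpq w =>
    refine .inr ⟨q, fun hq => hmin q hq ?_, hpq, w, ((Walk.cons_isPath_iff ..).1 hw).2⟩
    calc T.dist q u ≤ w.length := dist_le w
      _ < T.dist p u := by rw [← hlen, Walk.length_cons]; exact Nat.lt_succ_self _

lemma disjoint_hangingAt (hT : T.IsAcyclic) (hP : (T.induce P).Preconnected) (hp : p ∈ P)
    (hp' : p' ∈ P) (hpp' : p ≠ p') : Disjoint (hangingAt T P p) (hangingAt T P p') := by
  have disjoint_branch {p q : ι} (hp : p ∈ P) (hq : q ∉ P) (hpq : T.Adj p q) :=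
    Set.disjoint_left.1 (disjoint_branch_of_preconnected_induce hT hP hp hq hpq)
  refine Set.disjoint_left.2 ?_
  rintro u (rfl | ⟨q, hq, hpq, hu⟩) (rfl | ⟨q', hq', hpq', hu'⟩)
  · exact hpp' rfl
  · exact disjoint_branch hp' hq' hpq' hp hu'
  · exact disjoint_branch hp hq hpq hp' hu
  · have hsub := branch_subset_branch (disjoint_branch hp' hq' hpq' hp) hu' hu
    exact disjoint_branch hp hq hpq hp'
      (mem_branch_of_adj (hsub (right_mem_branch hpq'.ne)) hpq'.symm hpp'.symm)

lemma mem_of_mem_hangingAt (hT : T.IsAcyclic) (hP : (T.induce P).Preconnected)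
    (hs : (T.induce s).Preconnected) (hp : p ∈ P) (hp' : p' ∈ P) (hpp' : p ≠ p') (hu : u ∈ s)
    (hup : u ∈ hangingAt T P p) (hu' : u' ∈ s) (hup' : u' ∈ hangingAt T P p') : p ∈ s := by
  by_contra hps
  obtain rfl | ⟨q, hq, hpq, huq⟩ := hup
  · exact hps hu
  · have hu'q := subset_branch_of_preconnected_induce hs hps hu huq hu'
    exact Set.disjoint_left.1 (disjoint_hangingAt hT hP hp hp' hpp')
      (.inr ⟨q, hq, hpq, hu'q⟩) hup'

end HangingAt

section LightPath

variable {V ι : Type*} {T : SimpleGraph ι} {𝒮 : V → Set ι} {A : Finset V} {N : ℕ}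
  {a p q x y p' q' : ι}

open Classical in
/-- The members of `A` whose subtree lies entirely inside the branch of `T` at `x` in the direction
of `y`. -/
noncomputable def trapped (T : SimpleGraph ι) (𝒮 : V → Set ι) (A : Finset V) (x y : ι) : Finset V :=
  {v ∈ A | 𝒮 v ⊆ branch T x y}

lemma mem_trapped {v : V} : v ∈ trapped T 𝒮 A x y ↔ v ∈ A ∧ 𝒮 v ⊆ branch T x y := by
  simp [trapped]

lemma trapped_subset : trapped T 𝒮 A x y ⊆ A := fun _ hv => (mem_trapped.1 hv).1

lemma trapped_mono (h : branch T p q ⊆ branch T x y) : trapped T 𝒮 A p q ⊆ trapped T 𝒮 A x y :=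
  fun _ hv => mem_trapped.2 ⟨(mem_trapped.1 hv).1, (mem_trapped.1 hv).2.trans h⟩

lemma disjoint_trapped (h𝒮 : ∀ v, (𝒮 v).Nonempty) (h : Disjoint (branch T p q) (branch T x y)) :
    Disjoint (trapped T 𝒮 A p q) (trapped T 𝒮 A x y) := by
  refine Finset.disjoint_left.2 fun v hv hv' => ?_
  obtain ⟨u, hu⟩ := h𝒮 v
  exact Set.disjoint_left.1 h ((mem_trapped.1 hv).2 hu) ((mem_trapped.1 hv').2 hu)

lemma exists_minimal_heavy_branch (hT : T.IsTree) (h𝒮 : ∀ v, (𝒮 v).Nonempty) (hN : 0 < N)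
    (hpq : T.Adj p q) (hheavy : N ≤ (trapped T 𝒮 A p q).card) :
    ∃ x a, T.Adj x a ∧ N ≤ (trapped T 𝒮 A x a).card ∧ branch T x a ⊆ branch T p q ∧
      ∀ z, T.Adj a z → z ≠ x → (trapped T 𝒮 A a z).card < N := by
  choose t ht using h𝒮
  -- The tree may be infinite, so the descent is on the total distance to the chosen nodes `t v` of
  -- the trapped subtrees.
  induction hm : ∑ v ∈ trapped T 𝒮 A p q, T.dist q (t v) using Nat.strong_induction_on
    generalizing p q with | _ m ih
  by_cases hlight : ∀ z, T.Adj q z → z ≠ p → (trapped T 𝒮 A q z).card < N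
  · exact ⟨p, q, hpq, hheavy, subset_rfl, hlight⟩
  push Not at hlight
  obtain ⟨z, hqz, hzp, hz⟩ := hlight
  have hsub := branch_subset_branch_of_ne hT.isAcyclic hpq hqz hzp
  have hdecrease : ∑ v ∈ trapped T 𝒮 A q z, T.dist z (t v) < m := calc
    _ < ∑ v ∈ trapped T 𝒮 A q z, T.dist q (t v) :=
      Finset.sum_lt_sum_of_nonempty (Finset.card_pos.1 (hN.trans_le hz)) fun v hv =>
        dist_lt_dist_of_mem_branch hT hqz ((mem_trapped.1 hv).2 (ht v))
    _ ≤ m := hm ▸ Finset.sum_le_sum_of_subset (trapped_mono hsub)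
  obtain ⟨x, a, hxa, hheavy', hsub', hlight⟩ := ih _ hdecrease hqz hz rfl
  exact ⟨x, a, hxa, hheavy', hsub'.trans hsub, hlight⟩

lemma disjoint_branch_of_heavy (hT : T.IsTree) (hxa : T.Adj x a)
    (hlight : ∀ z, T.Adj a z → z ≠ x → (trapped T 𝒮 A a z).card < N)
    (hpq : p ≠ q) (ha : a ∉ branch T p q) (hheavy : N ≤ (trapped T 𝒮 A p q).card) :
    Disjoint (branch T p q) (branch T x a) := by
  refine (disjoint_branch_or_exists_branch_subset hT hxa hpq ha).resolve_right ?_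
  rintro ⟨z, haz, hzx, hsub⟩
  exact (hlight z haz hzx).not_ge (hheavy.trans (Finset.card_le_card (trapped_mono hsub)))

lemma card_trapped_lt_of_disjoint (h𝒮 : ∀ v, (𝒮 v).Nonempty) (hA : A.card < 3 * N)
    (hpp' : Disjoint (branch T p q) (branch T p' q')) (hpx : Disjoint (branch T p q) (branch T x y))
    (hp'x : Disjoint (branch T p' q') (branch T x y)) (hheavy : N ≤ (trapped T 𝒮 A p q).card)
    (hheavy' : N ≤ (trapped T 𝒮 A p' q').card) : (trapped T 𝒮 A x y).card < N := by
  classical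
  have hcard : (trapped T 𝒮 A p q ∪ trapped T 𝒮 A p' q' ∪ trapped T 𝒮 A x y).card ≤ A.card :=
    Finset.card_le_card
      (Finset.union_subset (Finset.union_subset trapped_subset trapped_subset) trapped_subset)
  rw [Finset.card_union_of_disjoint (Finset.disjoint_union_left.2
    ⟨disjoint_trapped h𝒮 hpx, disjoint_trapped h𝒮 hp'x⟩),
    Finset.card_union_of_disjoint (disjoint_trapped h𝒮 hpp')] at hcard
  lia

lemma notMem_branch_of_mem_support (hT : T.IsAcyclic) {b c : ι} (w : T.Walk a b)
    (hc : c ∈ w.support) (hp : p ∈ w.support) (hq : q ∉ w.support) (hpq : T.Adj p q) :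
    c ∉ branch T p q :=
  Set.disjoint_left.1 (disjoint_branch_of_preconnected_induce hT
    w.connected_induce_support.preconnected hp hq hpq) hc

-- Call a branch heavy if it traps at least `N` subtrees. A path joining the roots of two disjoint
-- minimal heavy branches works, since a heavy branch leaving it would be disjoint from both; if no
-- two heavy branches are disjoint, the root of a minimal one is enough.
lemma exists_isPath_forall_card_trapped_lt (hT : T.IsTree) (h𝒮 : ∀ v, (𝒮 v).Nonempty)
    (hA : A.card < 3 * N) :
    ∃ (a b : ι) (w : T.Walk a b), w.IsPath ∧ ∀ p ∈ w.support, ∀ q ∉ w.support, T.Adj p q →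
      (trapped T 𝒮 A p q).card < N := by
  have hN : 0 < N := by lia
  by_cases hheavy : ∃ p q, T.Adj p q ∧ N ≤ (trapped T 𝒮 A p q).card
  swap
  · push Not at hheavy
    obtain ⟨r⟩ := hT.connected.nonempty
    exact ⟨r, r, .nil, .nil, fun p _ q _ hpq => hheavy p q hpq⟩
  obtain ⟨_, _, hpq, hpq_heavy⟩ := hheavy
  obtain ⟨x, a, hxa, hxa_heavy, -, ha⟩ := exists_minimal_heavy_branch hT h𝒮 hN hpq hpq_heavy
  by_cases hdisj : ∃ p q, T.Adj p q ∧ N ≤ (trapped T 𝒮 A p q).card ∧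
      Disjoint (branch T p q) (branch T x a)
  swap
  · refine ⟨a, a, .nil, .nil, fun p hp q hq hpq => lt_of_not_ge fun h => hdisj ?_⟩
    exact ⟨p, q, hpq, h, disjoint_branch_of_heavy hT hxa ha hpq.ne
      (notMem_branch_of_mem_support hT.isAcyclic .nil (by simp) hp hq hpq) h⟩
  obtain ⟨_, _, hpq', hpq'_heavy, hdisj⟩ := hdisj
  obtain ⟨y, b, hyb, hyb_heavy, hsub, hb⟩ := exists_minimal_heavy_branch hT h𝒮 hN hpq' hpq'_heavy
  obtain ⟨w, hw⟩ := hT.connected.exists_isPath a b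
  refine ⟨a, b, w, hw, fun p hp q hq hpq => lt_of_not_ge fun h => h.not_gt ?_⟩
  have disjoint_left := disjoint_branch_of_heavy hT hxa ha hpq.ne
    (notMem_branch_of_mem_support hT.isAcyclic w w.start_mem_support hp hq hpq) h
  have disjoint_right := disjoint_branch_of_heavy hT hyb hb hpq.ne
    (notMem_branch_of_mem_support hT.isAcyclic w w.end_mem_support hp hq hpq) h
  exact card_trapped_lt_of_disjoint h𝒮 hA (hdisj.mono_left hsub).symm disjoint_left.symm
    disjoint_right.symm hxa_heavy hyb_heavy

end LightPath

section LinearDecomp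

variable {V : Type*} {G : SimpleGraph V} {S : Finset V} {b k : ℕ}

/-- A path-decomposition of the subgraph of `G` induced by `S`, with bags indexed by an arbitrary
linear order so that decompositions can be nested lexicographically. -/
structure IsLinearDecomp {J : Type*} [LinearOrder J] (G : SimpleGraph V) (S : Finset V)
    (Z : J → Finset V) : Prop where
  subset : ∀ j, Z j ⊆ S
  exists_mem : ∀ v ∈ S, ∃ j, v ∈ Z j
  exists_mem_mem_of_adj : ∀ v ∈ S, ∀ w ∈ S, G.Adj v w → ∃ j, v ∈ Z j ∧ w ∈ Z j
  ordConnected : ∀ v, {j | v ∈ Z j}.OrdConnected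

/-- The subgraph of `G` induced by `S` has a finite, nonempty path-decomposition into bags of size
at most `b`. -/
def HasLinearDecomp (G : SimpleGraph V) (S : Finset V) (b : ℕ) : Prop :=
  ∃ (J : Type) (_ : LinearOrder J) (_ : Finite J) (_ : Nonempty J) (Z : J → Finset V),
    IsLinearDecomp G S Z ∧ ∀ j, (Z j).card ≤ b

lemma hasLinearDecomp_empty : HasLinearDecomp G ∅ b :=
  ⟨Unit, inferInstance, inferInstance, inferInstance, fun _ => ∅,
    ⟨by simp, by simp, by simp, fun _ => by simpa using Set.ordConnected_empty⟩, by simp⟩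

lemma fst_le_fst_of_lex_le {I : Type*} [LinearOrder I] {J : I → Type*} [∀ i, LinearOrder (J i)]
    {x y : Σₗ i, J i} (h : x ≤ y) : x.1 ≤ y.1 :=
  (Sigma.Lex.le_def.1 h).elim le_of_lt fun ⟨h, _⟩ => h.le

lemma lex_mk_le_lex_mk_iff {I : Type*} [LinearOrder I] {J : I → Type*} [∀ i, LinearOrder (J i)]
    {i : I} {a b : J i} : toLex (⟨i, a⟩ : Σ i, J i) ≤ toLex ⟨i, b⟩ ↔ a ≤ b := by
  refine Sigma.Lex.le_def.trans ⟨?_, fun h => .inr ⟨rfl, h⟩⟩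
  rintro (h | ⟨_, h⟩)
  exacts [(lt_irrefl i h).elim, h]

section SdiffUnion

variable [DecidableEq V] {J : Type*} [LinearOrder J] [Nonempty J] {C Y : Finset V}
  {Z : J → Finset V} {v w : V}

lemma IsLinearDecomp.exists_mem_sdiff_union (hZ : IsLinearDecomp G C Z) (hv : v ∈ Y) :
    ∃ j, v ∈ Y \ C ∪ Z j := by
  by_cases hvC : v ∈ C
  · obtain ⟨j, hj⟩ := hZ.exists_mem v hvC
    exact ⟨j, Finset.mem_union_right _ hj⟩
  · exact ⟨Classical.arbitrary J, Finset.mem_union_left _ (Finset.mem_sdiff.2 ⟨hv, hvC⟩)⟩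

lemma IsLinearDecomp.exists_mem_mem_sdiff_union (hZ : IsLinearDecomp G C Z) (hv : v ∈ Y)
    (hw : w ∈ Y) (hvw : G.Adj v w) : ∃ j, v ∈ Y \ C ∪ Z j ∧ w ∈ Y \ C ∪ Z j := by
  by_cases hvC : v ∈ C
  · by_cases hwC : w ∈ C
    · obtain ⟨j, hjv, hjw⟩ := hZ.exists_mem_mem_of_adj v hvC w hwC hvw
      exact ⟨j, Finset.mem_union_right _ hjv, Finset.mem_union_right _ hjw⟩
    · obtain ⟨j, hj⟩ := hZ.exists_mem_sdiff_union hv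
      exact ⟨j, hj, Finset.mem_union_left _ (Finset.mem_sdiff.2 ⟨hw, hwC⟩)⟩
  · obtain ⟨j, hj⟩ := hZ.exists_mem_sdiff_union hw
    exact ⟨j, Finset.mem_union_left _ (Finset.mem_sdiff.2 ⟨hv, hvC⟩), hj⟩

end SdiffUnion

lemma IsLinearDecomp.refine [DecidableEq V] {I : Type*} [LinearOrder I] {J : I → Type*}
    [∀ i, LinearOrder (J i)] [∀ i, Nonempty (J i)] {Y C : I → Finset V} {Z : ∀ i, J i → Finset V}
    (hY : IsLinearDecomp G S Y) (hCY : ∀ i, C i ⊆ Y i)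
    (hC : ∀ i j v, v ∈ C i → v ∈ Y j → i = j) (hZ : ∀ i, IsLinearDecomp G (C i) (Z i)) :
    IsLinearDecomp G S fun x : Σₗ i, J i => Y x.1 \ C x.1 ∪ Z x.1 x.2 := by
  have bag_subset (i : I) (j : J i) : Y i \ C i ∪ Z i j ⊆ Y i :=
    Finset.union_subset Finset.sdiff_subset (((hZ i).subset j).trans (hCY i))
  refine ⟨fun x => (bag_subset x.1 x.2).trans (hY.subset x.1), fun v hv => ?_,
    fun v hv w hw hvw => ?_, fun v => ⟨?_⟩⟩
  · obtain ⟨i, hi⟩ := hY.exists_mem v hv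
    obtain ⟨j, hj⟩ := (hZ i).exists_mem_sdiff_union hi
    exact ⟨toLex ⟨i, j⟩, hj⟩
  · obtain ⟨i, hiv, hiw⟩ := hY.exists_mem_mem_of_adj v hv w hw hvw
    obtain ⟨j, hj⟩ := (hZ i).exists_mem_mem_sdiff_union hiv hiw hvw
    exact ⟨toLex ⟨i, j⟩, hj⟩
  · rintro ⟨i, a⟩ hx ⟨l, c⟩ hz ⟨m, d⟩ ⟨hxy, hyz⟩
    have hiY := bag_subset i a hx
    have hlY := bag_subset l c hz
    have hmY : v ∈ Y m := (hY.ordConnected v).out hiY hlY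
      ⟨fst_le_fst_of_lex_le hxy, fst_le_fst_of_lex_le hyz⟩
    by_cases hmC : v ∈ C m
    · obtain rfl := hC m i v hmC hiY
      obtain rfl := hC m l v hmC hlY
      have mem_right {j : J m} (h : v ∈ Y m \ C m ∪ Z m j) : v ∈ Z m j :=
        (Finset.mem_union.1 h).resolve_left fun h => (Finset.mem_sdiff.1 h).2 hmC
      exact Finset.mem_union_right _ (((hZ m).ordConnected v).out (mem_right hx) (mem_right hz)
        ⟨lex_mk_le_lex_mk_iff.1 hxy, lex_mk_le_lex_mk_iff.1 hyz⟩)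
    · exact Finset.mem_union_left _ (Finset.mem_sdiff.2 ⟨hmY, hmC⟩)

lemma IsLinearDecomp.hasLinearDecomp [DecidableEq V] {I : Type} [LinearOrder I] [Finite I]
    [Nonempty I] {Y C : I → Finset V} (hY : IsLinearDecomp G S Y) (hCY : ∀ i, C i ⊆ Y i)
    (hC : ∀ i j v, v ∈ C i → v ∈ Y j → i = j) (hk : ∀ i, (Y i \ C i).card ≤ k)
    (hb : ∀ i, HasLinearDecomp G (C i) b) : HasLinearDecomp G S (b + k) := by
  obtain ⟨i₀⟩ := (inferInstance : Nonempty I)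
  choose J hord hfin hne Z hZ hZb using hb
  refine ⟨Σₗ i, J i, inferInstance, inferInstanceAs (Finite (Σ i, J i)),
    ⟨toLex ⟨i₀, Classical.arbitrary _⟩⟩, _, hY.refine hCY hC hZ, fun x => ?_⟩
  calc _ ≤ (Y x.1 \ C x.1).card + (Z x.1 x.2).card := Finset.card_union_le _ _
    _ ≤ b + k := by linarith [hk x.1, hZb x.1 x.2]

lemma hasLinearDecomp_of_fiberwise {κ : Type} [DecidableEq κ] (g : V → κ)
    (hg : ∀ v ∈ S, ∀ w ∈ S, G.Adj v w → g v = g w)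
    (hb : ∀ c, HasLinearDecomp G {v ∈ S | g v = c} b) : HasLinearDecomp G S b := by
  classical
  obtain rfl | hS := S.eq_empty_or_nonempty
  · exact hasLinearDecomp_empty
  let I := S.image g
  have : Nonempty I := (hS.image g).to_subtype
  let _ : LinearOrder I := IsWellOrder.linearOrder WellOrderingRel
  let Y (c : I) : Finset V := {v ∈ S | g v = c}
  have fiber_unique (c d : I) (v : V) (hc : v ∈ Y c) (hd : v ∈ Y d) : c = d :=
    Subtype.ext ((Finset.mem_filter.1 hc).2.symm.trans (Finset.mem_filter.1 hd).2)
  have hY : IsLinearDecomp G S Y := by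
    refine ⟨fun c => Finset.filter_subset _ S, fun v hv => ?_, fun v hv w hw hvw => ?_, fun v => ?_⟩
    · exact ⟨⟨g v, Finset.mem_image_of_mem g hv⟩, by simp [Y, hv]⟩
    · exact ⟨⟨g v, Finset.mem_image_of_mem g hv⟩, by simp [Y, hv, hw, hg v hv w hw hvw]⟩
    · refine ⟨fun c hc d hd e he => ?_⟩
      obtain rfl := fiber_unique c d v hc hd
      rwa [le_antisymm he.2 he.1]
  exact hY.hasLinearDecomp (k := 0) (fun _ => subset_rfl) fiber_unique (by simp) fun c => hb c

end LinearDecomp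

section Contraction

variable {V ι : Type} {G : SimpleGraph V} {T : SimpleGraph ι} {X : ι → Finset V} {S : Finset V}
  {P : Set ι} {p p' : ι} {v : V}

open Classical in
/-- The bag at `p` of the decomposition of the subgraph induced by `S` that is obtained from the
tree-decomposition `(T, X)` by contracting onto the subtree `P` all branches leaving it. -/
noncomputable def contractedBag (T : SimpleGraph ι) (X : ι → Finset V) (S : Finset V) (P : Set ι)
    (p : ι) : Finset V :=
  {v ∈ S | ∃ u ∈ hangingAt T P p, v ∈ X u}

lemma mem_contractedBag :
    v ∈ contractedBag T X S P p ↔ v ∈ S ∧ ∃ u ∈ hangingAt T P p, v ∈ X u := by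
  simp [contractedBag]

lemma mem_bag_of_mem_contractedBag (h : IsTreeDecomp G T X) (hP : (T.induce P).Preconnected)
    (hp : p ∈ P) (hp' : p' ∈ P) (hpp' : p ≠ p') (hv : v ∈ contractedBag T X S P p)
    (hv' : v ∈ contractedBag T X S P p') : v ∈ X p := by
  obtain ⟨hT, -, -, hconn⟩ := h
  obtain ⟨-, u, hup, hu⟩ := mem_contractedBag.1 hv
  obtain ⟨-, u', hup', hu'⟩ := mem_contractedBag.1 hv'
  exact mem_of_mem_hangingAt (s := {u | v ∈ X u}) hT.isAcyclic hP (hconn v).preconnected hp hp'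
    hpp' hu hup hu' hup'

lemma mem_bag_getVert_of_mem_contractedBag (h : IsTreeDecomp G T X) {a b : ι} {w : T.Walk a b}
    (hw : w.IsPath) {i j : Fin (w.length + 1)} (hij : i ≠ j)
    (hi : v ∈ contractedBag T X S {u | u ∈ w.support} (w.getVert i))
    (hj : v ∈ contractedBag T X S {u | u ∈ w.support} (w.getVert j)) : v ∈ X (w.getVert i) := by
  refine mem_bag_of_mem_contractedBag h w.connected_induce_support.preconnected
    (w.getVert_mem_support i) (w.getVert_mem_support j) (fun heq => hij ?_) hi hj
  exact Fin.ext (hw.getVert_injOn (Nat.le_of_lt_succ i.2) (Nat.le_of_lt_succ j.2) heq)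

lemma isLinearDecomp_contractedBag (h : IsTreeDecomp G T X) {a b : ι} {w : T.Walk a b}
    (hw : w.IsPath) : IsLinearDecomp G S fun i : Fin (w.length + 1) =>
      contractedBag T X S {u | u ∈ w.support} (w.getVert i) := by
  have ⟨hT, hcover, hedge, hconn⟩ := h
  have exists_mem_hangingAt_getVert (u : ι) :
      ∃ i : Fin (w.length + 1), u ∈ hangingAt T {u | u ∈ w.support} (w.getVert i) := by
    obtain ⟨p, hp, hu⟩ := exists_mem_hangingAt hT.connected (P := {u | u ∈ w.support})
      ⟨a, w.start_mem_support⟩ u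
    obtain ⟨i, rfl, hi⟩ := (Walk.mem_support_iff_exists_getVert (p := w)).1 hp
    exact ⟨⟨i, Nat.lt_succ_of_le hi⟩, hu⟩
  refine ⟨fun i v hv => (mem_contractedBag.1 hv).1, fun v hv => ?_, fun v hv v' hv' hvv' => ?_,
    fun v => ⟨fun i hi l hl j hj => ?_⟩⟩
  · obtain ⟨u, hu⟩ := hcover v
    obtain ⟨i, hi⟩ := exists_mem_hangingAt_getVert u
    exact ⟨i, mem_contractedBag.2 ⟨hv, u, hi, hu⟩⟩
  · obtain ⟨u, hu, hu'⟩ := hedge v v' hvv'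
    obtain ⟨i, hi⟩ := exists_mem_hangingAt_getVert u
    exact ⟨i, mem_contractedBag.2 ⟨hv, u, hi, hu⟩, mem_contractedBag.2 ⟨hv', u, hi, hu'⟩⟩
  · obtain rfl | hil := eq_or_ne i l
    · rwa [← le_antisymm hj.1 hj.2]
    exact mem_contractedBag.2 ⟨(mem_contractedBag.1 hi).1, w.getVert j, .inl rfl,
      getVert_mem_of_preconnected_induce (s := {u | v ∈ X u}) hT.isAcyclic
        (hconn v).preconnected hw hj.1 hj.2
        (mem_bag_getVert_of_mem_contractedBag h hw hil hi hl)
        (mem_bag_getVert_of_mem_contractedBag h hw (Ne.symm hil) hl hi)⟩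

lemma exists_adj_subset_branch (h : IsTreeDecomp G T X) (hv : v ∈ contractedBag T X S P p)
    (hvp : v ∉ X p) : ∃ q ∉ P, T.Adj p q ∧ {u | v ∈ X u} ⊆ branch T p q := by
  obtain ⟨-, -, -, hconn⟩ := h
  obtain ⟨-, u, rfl | ⟨q, hq, hpq, huq⟩, hu⟩ := mem_contractedBag.1 hv
  · exact (hvp hu).elim
  · exact ⟨q, hq, hpq,
      subset_branch_of_preconnected_induce (hconn v).preconnected hvp hu huq⟩

lemma hasLinearDecomp_contractedBag_sdiff [DecidableEq V] (h : IsTreeDecomp G T X) {N b : ℕ}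
    (hb : ∀ A : Finset V, A.card < N → HasLinearDecomp G A b)
    (hlight : ∀ q ∉ P, T.Adj p q → (trapped T (fun v => {u | v ∈ X u}) S p q).card < N) :
    HasLinearDecomp G (contractedBag T X S P p \ X p) b := by
  classical
  have ⟨hT, _, hedge, _⟩ := h
  have : Nonempty ι := ⟨p⟩
  have hbranch : ∀ v ∈ contractedBag T X S P p \ X p,
      ∃ q, q ∉ P ∧ T.Adj p q ∧ {u | v ∈ X u} ⊆ branch T p q := fun v hv =>
    exists_adj_subset_branch h (Finset.mem_sdiff.1 hv).1 (Finset.mem_sdiff.1 hv).2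
  choose! g hgP hgadj hgsub using hbranch
  refine hasLinearDecomp_of_fiberwise g (fun v hv w hw hvw => ?_) fun q => ?_
  · by_contra hne
    obtain ⟨u, huv, huw⟩ := hedge v w hvw
    exact Set.disjoint_left.1 (disjoint_branch_of_ne hT.isAcyclic (hgadj v hv) (hgadj w hw) hne)
      (hgsub v hv huv) (hgsub w hw huw)
  · obtain hempty | ⟨v, hv⟩ :=
        Finset.eq_empty_or_nonempty {v ∈ contractedBag T X S P p \ X p | g v = q}
    · exact hempty ▸ hasLinearDecomp_empty
    replace ⟨hv, hvq⟩ := Finset.mem_filter.1 hv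
    subst hvq
    refine hb _ (lt_of_le_of_lt (Finset.card_le_card fun v' hv' => ?_)
      (hlight (g v) (hgP v hv) (hgadj v hv)))
    obtain ⟨hv', heq⟩ := Finset.mem_filter.1 hv'
    exact mem_trapped.2 ⟨(mem_contractedBag.1 (Finset.mem_sdiff.1 hv').1).1, heq ▸ hgsub v' hv'⟩

theorem hasLinearDecomp_of_card_lt_three_pow (h : IsTreeDecomp G T X) {k : ℕ}
    (hk : ∀ u, (X u).card ≤ k) (s : ℕ) (S : Finset V) (hS : S.card < 3 ^ s) :
    HasLinearDecomp G S (s * k) := by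
  classical
  have ⟨hT, hcover, _, _⟩ := h
  induction s generalizing S with
  | zero =>
    rw [Finset.card_eq_zero.1 (Nat.lt_one_iff.1 hS)]
    exact hasLinearDecomp_empty
  | succ s ih =>
    have bag_nonempty (v : V) : {u | v ∈ X u}.Nonempty := hcover v
    obtain ⟨a, b, w, hw, hlight⟩ := exists_isPath_forall_card_trapped_lt hT bag_nonempty
      (hS.trans_eq (pow_succ' 3 s))
    rw [Nat.succ_mul]
    refine (isLinearDecomp_contractedBag h hw).hasLinearDecomp
      (C := fun i : Fin (w.length + 1) =>
        contractedBag T X S {u | u ∈ w.support} (w.getVert i) \ X (w.getVert i))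
      (fun i => Finset.sdiff_subset) (fun i j v hi hj => ?_) (fun i => ?_) fun i => ?_
    · obtain ⟨hi, hvX⟩ := Finset.mem_sdiff.1 hi
      by_contra hij
      exact hvX (mem_bag_getVert_of_mem_contractedBag h hw hij hi hj)
    · rw [Finset.sdiff_sdiff_self_left]
      exact (Finset.card_le_card Finset.inter_subset_right).trans (hk _)
    · exact hasLinearDecomp_contractedBag_sdiff h ih (hlight _ (w.getVert_mem_support i))

end Contraction

section Hasse

variable {α : Type*} [LinearOrder α]

lemma mem_edges_of_covBy {a b : α} (hab : a ⋖ b) (w : (hasse α).Walk a b) : s(a, b) ∈ w.edges := by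
  obtain ⟨d, hd, hle, hlt⟩ := w.exists_boundary_dart (Set.Iic a) le_rfl hab.lt.not_ge
  simp only [Set.mem_Iic, not_le] at hle hlt
  have hcov : d.fst ⋖ d.snd :=
    (hasse_adj.1 d.adj).resolve_right fun h => (h.lt.trans_le hle).not_gt hlt
  have hfst : d.fst = a := hle.eq_of_not_lt fun h => hcov.2 h hlt
  have hsnd : d.snd = b := CovBy.unique_right (hfst ▸ hcov) hab
  exact List.mem_map.2 ⟨d, hd, by rw [← hfst, ← hsnd]; rfl⟩

lemma isAcyclic_hasse : (hasse α).IsAcyclic := by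
  refine isAcyclic_iff_forall_adj_isBridge.2 fun a b hab => ?_
  obtain hab | hba := hasse_adj.1 hab
  · exact isBridge_iff_forall_walk_mem_edges.2 (mem_edges_of_covBy hab)
  · exact Sym2.eq_swap ▸ isBridge_iff_forall_walk_mem_edges.2 (mem_edges_of_covBy hba)

lemma preconnected_induce_hasse [SuccOrder α] [IsSuccArchimedean α] {s : Set α}
    (hs : s.OrdConnected) : ((hasse α).induce s).Preconnected := by
  have covBy_val {a b : s} (hab : a ⋖ b) : (a : α) ⋖ b :=
    (Set.OrdConnected.apply_covBy_apply_iff (OrderEmbedding.subtype (· ∈ s)) (by simpa)).2 hab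
  let _ : SuccOrder s := Set.OrdConnected.succOrder
  refine (hasse_preconnected_of_succ s).mono fun a b hab => ?_
  exact hab.imp covBy_val covBy_val

end Hasse

section Width

variable {V ι : Type} {G : SimpleGraph V} {k : ℕ}

lemma IsPathDecomp.isTreeDecomp {n : ℕ} {X : Fin (n + 1) → Finset V} (h : IsPathDecomp G X) :
    IsTreeDecomp G (pathGraph (n + 1)) X := by
  obtain ⟨hcover, hedge, hconvex⟩ := h
  refine ⟨⟨pathGraph_connected n, isAcyclic_hasse⟩, hcover, hedge, fun v => ?_⟩
  have : Nonempty {i | v ∈ X i} := Set.Nonempty.to_subtype (hcover v)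
  refine ⟨preconnected_induce_hasse ⟨fun i hi l hl j hj => ?_⟩⟩
  obtain rfl | hij := hj.1.eq_or_lt
  · exact hi
  obtain rfl | hjl := hj.2.eq_or_lt
  · exact hl
  exact hconvex i j l hij hjl v hi hl

lemma isTreeDecomp_univ [Fintype V] : IsTreeDecomp G (⊥ : SimpleGraph Unit) fun _ => .univ := by
  refine ⟨.of_subsingleton, by simp, by simp, fun v => ?_⟩
  have : Nonempty {_u : Unit | v ∈ (Finset.univ : Finset V)} := ⟨⟨(), Finset.mem_univ v⟩⟩
  exact IsTree.of_subsingleton.connected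

lemma isPathDecomp_univ [Fintype V] : IsPathDecomp G fun _ : Fin 1 => .univ := by
  simp [IsPathDecomp]

lemma sSup_range_card_sub_one_le {X : ι → Finset V} (hX : ∀ u, (X u).card ≤ k + 1) :
    sSup (Set.range fun u => (X u).card) - 1 ≤ k :=
  Nat.sub_le_of_le_add (csSup_le' (Set.forall_mem_range.2 hX))

lemma card_le_sSup_range_card_sub_one [Finite V] (X : ι → Finset V) (u : ι) :
    (X u).card ≤ sSup (Set.range fun u => (X u).card) - 1 + 1 := by
  have := Fintype.ofFinite V
  have hbdd : BddAbove (Set.range fun u => (X u).card) :=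
    ⟨Fintype.card V, Set.forall_mem_range.2 fun u => (X u).card_le_univ⟩
  exact (le_csSup hbdd (Set.mem_range_self u)).trans le_tsub_add

lemma treewidth_le {T : SimpleGraph ι} {X : ι → Finset V} (h : IsTreeDecomp G T X)
    (hX : ∀ u, (X u).card ≤ k + 1) : treewidth G ≤ k :=
  le_trans (Nat.sInf_le ⟨ι, T, X, h, rfl⟩) (sSup_range_card_sub_one_le hX)

lemma pathwidth_le {r : ℕ} {X : Fin r → Finset V} (h : IsPathDecomp G X)
    (hX : ∀ i, (X i).card ≤ k + 1) : pathwidth G ≤ k :=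
  le_trans (Nat.sInf_le ⟨r, X, h, rfl⟩) (sSup_range_card_sub_one_le hX)

lemma exists_isTreeDecomp_card_le [Finite V] (G : SimpleGraph V) :
    ∃ (ι : Type) (T : SimpleGraph ι) (X : ι → Finset V),
      IsTreeDecomp G T X ∧ ∀ u, (X u).card ≤ treewidth G + 1 := by
  have := Fintype.ofFinite V
  obtain ⟨ι, T, X, h, hwidth⟩ := Nat.sInf_mem (s := {k | ∃ (ι : Type) (T : SimpleGraph ι)
    (X : ι → Finset V), IsTreeDecomp G T X ∧ sSup (Set.range fun u => (X u).card) - 1 = k})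
    ⟨_, _, _, _, isTreeDecomp_univ, rfl⟩
  exact ⟨ι, T, X, h, fun u => (card_le_sSup_range_card_sub_one X u).trans_eq (by rw [hwidth]; rfl)⟩

lemma exists_isPathDecomp_card_le [Finite V] (G : SimpleGraph V) :
    ∃ (r : ℕ) (X : Fin r → Finset V),
      IsPathDecomp G X ∧ ∀ i, (X i).card ≤ pathwidth G + 1 := by
  have := Fintype.ofFinite V
  obtain ⟨r, X, h, hwidth⟩ := Nat.sInf_mem (s := {k | ∃ (r : ℕ) (X : Fin r → Finset V),
    IsPathDecomp G X ∧ sSup (Set.range fun i => (X i).card) - 1 = k})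
    ⟨_, _, _, isPathDecomp_univ, rfl⟩
  exact ⟨r, X, h, fun i => (card_le_sSup_range_card_sub_one X i).trans_eq (by rw [hwidth]; rfl)⟩

lemma HasLinearDecomp.exists_isPathDecomp [Fintype V] {b : ℕ} (h : HasLinearDecomp G .univ b) :
    ∃ (r : ℕ) (X : Fin r → Finset V), IsPathDecomp G X ∧ ∀ i, (X i).card ≤ b := by
  obtain ⟨J, _, _, -, Z, hZ, hb⟩ := h
  have := Fintype.ofFinite J
  let e := Fintype.orderIsoFinOfCardEq J rfl
  refine ⟨Fintype.card J, Z ∘ e, ⟨fun v => ?_, fun v w hvw => ?_, fun i j l hij hjl v hi hl => ?_⟩,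
    fun i => hb (e i)⟩
  · exact e.surjective.exists.1 (hZ.exists_mem v (Finset.mem_univ v))
  · exact e.surjective.exists.1
      (hZ.exists_mem_mem_of_adj v (Finset.mem_univ v) w (Finset.mem_univ w) hvw)
  · exact (hZ.ordConnected v).out hi hl ⟨e.monotone hij.le, e.monotone hjl.le⟩

theorem treewidth_le_pathwidth [Finite V] (G : SimpleGraph V) : treewidth G ≤ pathwidth G := by
  have := Fintype.ofFinite V
  obtain ⟨r, X, h, hX⟩ := exists_isPathDecomp_card_le G
  cases r with
  | zero =>
    have : IsEmpty V := ⟨fun v => (h.1 v).elim fun i _ => i.elim0⟩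
    exact treewidth_le isTreeDecomp_univ (by simp)
  | succ n => exact treewidth_le h.isTreeDecomp hX

theorem pathwidth_add_one_le [Finite V] (G : SimpleGraph V) :
    pathwidth G + 1 ≤ (treewidth G + 1) * (Nat.log 3 (Nat.card V) + 1) := by
  have := Fintype.ofFinite V
  obtain ⟨ι, T, X, h, hX⟩ := exists_isTreeDecomp_card_le G
  have hcard : (Finset.univ : Finset V).card < 3 ^ (Nat.log 3 (Nat.card V) + 1) := by
    rw [Finset.card_univ, Nat.card_eq_fintype_card]
    exact Nat.lt_pow_succ_log_self (by norm_num) _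
  obtain ⟨r, Z, hZ, hZb⟩ :=
    (hasLinearDecomp_of_card_lt_three_pow h hX _ _ hcard).exists_isPathDecomp
  obtain ⟨b, hb⟩ := Nat.exists_eq_add_one_of_ne_zero
    (mul_pos (Nat.log 3 (Nat.card V)).succ_pos (treewidth G).succ_pos).ne'
  rw [mul_comm, hb]
  exact Nat.succ_le_succ (pathwidth_le hZ fun i => (hZb i).trans_eq hb)

end Width

/-- For every finite simple graph `G`, `tw(G) ≤ pw(G)` and
`pw(G) ≤ (tw(G) + 1)·(log₃(2·|V(G)| + 1) + 1) − 1`. -/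
theorem treewidth_le_pathwidth_and_pathwidth_le_log_bound
    {V : Type} [Fintype V] (G : SimpleGraph V) :
    treewidth G ≤ pathwidth G ∧
    (pathwidth G : ℝ) ≤
      ((treewidth G : ℝ) + 1) * (Real.logb 3 (2 * (Fintype.card V : ℝ) + 1) + 1) - 1 := by
  refine ⟨treewidth_le_pathwidth G, le_sub_iff_add_le.2 ?_⟩
  have log_le_logb : (Nat.log 3 (Nat.card V) : ℝ) ≤ Real.logb 3 (2 * Fintype.card V + 1) := calc
    (Nat.log 3 (Nat.card V) : ℝ) ≤ Nat.log 3 (2 * Fintype.card V + 1) := by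
      rw [Nat.card_eq_fintype_card]
      exact_mod_cast Nat.log_mono_right (by lia)
    _ ≤ Real.logb 3 (2 * Fintype.card V + 1) := by
      exact_mod_cast Real.natLog_le_logb (2 * Fintype.card V + 1) 3
  calc (pathwidth G : ℝ) + 1 ≤ (treewidth G + 1) * (Nat.log 3 (Nat.card V) + 1) := by
        exact_mod_cast pathwidth_add_one_le G
    _ ≤ (treewidth G + 1) * (Real.logb 3 (2 * Fintype.card V + 1) + 1) := by gcongr
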